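/- Let r ∈ ℝ, T > 0, p > 4, R > 0, N ≥ 1, and let σ : [0,∞)×ℝ → ℝ be measurable with |σ(x,u)| ≤ R(e^{rx}+|u|) for all x ≥ 0, u ∈ ℝ. Let u : [0,T]×[0,∞) → ℝ be continuous with ‖u‖_{C_r^T} < ∞, let h ∈ L²([0,T]×[0,∞)) with ∫_0^T∫_0^∞ h(s,y)² dy ds ≤ N², and define F(t,x) := ∫_0^t ∫_0^∞ G(t−s,x,y) σ(y,u(s,y)) h(s,y) dy ds. Then there exists a constant C = C(r,p,T) > 0 such that for all s, t ∈ [0,T] and all x ≥ 0, | e^{−rx} F(s,x) − e^{−rx} F(t,x) |^p ≤ C R^p N^p T ( 1 + ‖u‖_{C_r^T} )^p |s−t|^{(p−4)/4}. -/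

import Mathlib

/-!
By Cauchy–Schwarz in `L²((0,T] × (0,∞))`, the weighted increment of `F` is at most
`R (1 + ‖u‖) N` times the `L²` norm of `Gr r (s - ·) x · - Gr r (t - ·) x ·`, where
`|e^{-rz} σ(z,u)| ≤ R (1 + ‖u‖)` (`sq_sub_le`). Since the kernel vanishes at nonpositive times, both
convolutions are integrals over the same domain (`weighted_convolution_eq`).

It remains to bound the squared `L²` norm of the kernel difference by `C |s-t|^{2b}` for some
`b < 1/4` (`exists_lintegral_Gr_sub_sq_le`). Pointwise, the heat kernel satisfies
`|g_t - g_m| ≤ const ((m-t)/t)^b` times a sum of two wider Gaussians (`abs_gk_sub_le`), and the weight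
`e^{|r||w|}` costs only a constant and some more width on bounded time intervals. Integrating the
square over space gives `const |s-t|^{2b} v^{-2b-1/2}` with `v` the distance to the singular time,
which is integrable since `2b + 1/2 < 1`. If only the later kernel is present, its age is at
most `t - s`, and the same bound holds.

Taking `b = 1/4 - 1/p` and raising to the power `p/2` gives the exponent `(p-4)/4`.
-/

open MeasureTheory Real Set Filter

/-- Dirichlet heat kernel on `[0,∞)`. -/
noncomputable def G (t x y : ℝ) : ℝ :=
  (Real.sqrt (4 * Real.pi * t))⁻¹ *
    (Real.exp (-(x - y) ^ 2 / (4 * t)) - Real.exp (-(x + y) ^ 2 / (4 * t)))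

/-- Exponentially weighted kernel `G_r(t,x,y) = e^{-r(x-y)} G(t,x,y)`. -/
noncomputable def Gr (r t x y : ℝ) : ℝ := Real.exp (-r * (x - y)) * G t x y

/-- Weighted sup norm `‖v‖_{L_r} = sup_{x ≥ 0} e^{-rx}|v(x)|`. -/
noncomputable def LrNorm (r : ℝ) (v : ℝ → ℝ) : ℝ :=
  sSup ((fun x => Real.exp (-r * x) * |v x|) '' Ici 0)

/-- Weighted sup norm `‖u‖_{C_r^T} = sup_{t ∈ [0,T]} sup_{x ≥ 0} e^{-rx}|u(t,x)|`. -/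
noncomputable def CrNorm (r T : ℝ) (u : ℝ → ℝ → ℝ) : ℝ :=
  sSup ((fun q : ℝ × ℝ => Real.exp (-r * q.2) * |u q.1 q.2|) '' (Icc 0 T ×ˢ Ici 0))

/-- `‖u‖_{C_r^T} < ∞`, expressed as boundedness of the weighted values. -/
def CrBdd (r T : ℝ) (u : ℝ → ℝ → ℝ) : Prop :=
  BddAbove ((fun q : ℝ × ℝ => Real.exp (-r * q.2) * |u q.1 q.2|) '' (Icc 0 T ×ˢ Ici 0))

/-! ### Pointwise heat kernel estimates -/

/-- The heat kernel on the whole line; for `t ≤ 0` it is `0`, since then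
`√(4 * π * t) = 0` and `0⁻¹ = 0`. -/
noncomputable def gk (t w : ℝ) : ℝ := (√(4 * π * t))⁻¹ * exp (-w ^ 2 / (4 * t))

/-- A Gaussian profile of the same order as `gk`, four times as wide in variance; the extra
width absorbs both polynomial factors and the exponential weight. -/
noncomputable def psi (t w : ℝ) : ℝ := (√t)⁻¹ * exp (-w ^ 2 / (16 * t))

lemma G_eq (t x y : ℝ) : G t x y = gk t (x - y) - gk t (x + y) := by
  unfold G gk; ring

lemma gk_of_nonpos {t : ℝ} (ht : t ≤ 0) (w : ℝ) : gk t w = 0 := by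
  have : √(4 * π * t) = 0 := Real.sqrt_eq_zero_of_nonpos
    (mul_nonpos_of_nonneg_of_nonpos (by positivity) ht)
  simp [gk, this]

lemma le_rpow_of_le_one_of_le {v y b : ℝ} (hv : 0 ≤ v) (hb0 : 0 ≤ b) (hb : b ≤ 1)
    (h1 : y ≤ 1) (h2 : y ≤ v) : y ≤ v ^ b := by
  rcases le_total v 1 with h | h
  · calc y ≤ v ^ (1 : ℝ) := by simpa using h2
      _ ≤ v ^ b := Real.rpow_le_rpow_of_exponent_ge_of_imp hv h hb (by intro _ h; linarith)
  · exact h1.trans (Real.one_le_rpow h hb0)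

lemma rpow_mul_exp_neg_le {y b : ℝ} (hy : 0 ≤ y) (hb0 : 0 ≤ b) (hb : b ≤ 1) :
    y ^ b * exp (-y) ≤ 2 * exp (-(y / 2)) := by
  have h1 : y ^ b ≤ 1 + y := by
    rcases le_total y 1 with h | h
    · linarith [Real.rpow_le_one hy h hb0]
    · have := Real.rpow_le_rpow_of_exponent_le h hb
      rw [Real.rpow_one] at this; linarith
  have h2 : 1 + y ≤ 2 * exp (y / 2) := by linarith [Real.add_one_le_exp (y / 2)]
  calc y ^ b * exp (-y) ≤ (2 * exp (y / 2)) * exp (-y) := by gcongr; exact h1.trans h2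
    _ = 2 * exp (-(y / 2)) := by rw [mul_assoc, ← Real.exp_add]; ring_nf

lemma inv_sqrt_sub_le {t m : ℝ} (ht : 0 < t) (htm : t ≤ m) :
    (√t)⁻¹ - (√m)⁻¹ ≤ (√t)⁻¹ * ((m - t) / m) := by
  have hm : 0 < m := ht.trans_le htm
  have hst := Real.sqrt_pos.2 ht
  have hsm := Real.sqrt_pos.2 hm
  have hle := Real.sqrt_le_sqrt htm
  have e1 := Real.sq_sqrt ht.le
  have e2 := Real.sq_sqrt hm.le
  set A := √t
  set B := √m
  rw [← e1, ← e2]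
  have : A⁻¹ * ((B ^ 2 - A ^ 2) / B ^ 2) - (A⁻¹ - B⁻¹) = (B - A) / B ^ 2 := by
    field_simp; ring
  have h2 : 0 ≤ (B - A) / B ^ 2 := div_nonneg (by linarith) (by positivity)
  linarith

lemma gk_eq (t w : ℝ) : gk t w = (√(4 * π))⁻¹ * ((√t)⁻¹ * exp (-(w ^ 2 / (4 * t)))) := by
  unfold gk
  rw [Real.sqrt_mul (by positivity), mul_inv, neg_div]; ring

lemma inv_sqrt_four_pi_le : (√(4 * π))⁻¹ ≤ 1 := by
  apply inv_le_one_of_one_le₀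
  rw [Real.one_le_sqrt]
  linarith [Real.pi_gt_three]

/-- Hölder estimate in time, of any order `b ∈ [0,1]`, for the heat kernel. With `q = (m-t)/t`,
`Y = w²/(4m)` one has `w²/(4t) = Y + Yq`, so that the exponentials differ by at most
`e^{-Y} (Yq)^b ≤ 2 e^{-Y/2} q^b`. -/
lemma abs_gk_sub_le {t m b : ℝ} (ht : 0 < t) (htm : t ≤ m) (hb0 : 0 ≤ b) (hb : b ≤ 1)
    (w : ℝ) :
    |gk t w - gk m w| ≤ 2 * ((m - t) / t) ^ b *
      ((√t)⁻¹ * exp (-w ^ 2 / (8 * t)) + (√m)⁻¹ * exp (-w ^ 2 / (8 * m))) := by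
  have hm : 0 < m := ht.trans_le htm
  set q := (m - t) / t with hq
  have hq0 : 0 ≤ q := div_nonneg (by linarith) ht.le
  have hqb : 0 ≤ q ^ b := Real.rpow_nonneg hq0 b
  set X := w ^ 2 / (4 * t) with hX
  set Y := w ^ 2 / (4 * m) with hY
  have hX0 : 0 ≤ X := by positivity
  have hY0 : 0 ≤ Y := by positivity
  have hXY : X = Y + Y * q := by rw [hX, hY, hq]; field_simp; ring_nf
  have hα : 0 ≤ (√t)⁻¹ := by positivity
  have hβ : 0 ≤ (√m)⁻¹ := by positivity
  have hαβ : (√m)⁻¹ ≤ (√t)⁻¹ := by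
    have := Real.sqrt_pos.2 ht
    gcongr
  have h1 : (√t)⁻¹ - (√m)⁻¹ ≤ (√t)⁻¹ * q ^ b := by
    refine (inv_sqrt_sub_le ht htm).trans ?_
    gcongr
    refine le_rpow_of_le_one_of_le hq0 hb0 hb ?_ ?_
    · rw [div_le_one hm]; linarith
    · rw [hq]; gcongr
  have h2 : exp (-Y) - exp (-X) ≤ 2 * exp (-(Y / 2)) * q ^ b := by
    have : exp (-X) = exp (-Y) * exp (-(Y * q)) := by rw [← Real.exp_add, hXY]; ring_nf
    rw [this]
    have h3 : 1 - exp (-(Y * q)) ≤ (Y * q) ^ b := by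
      refine le_rpow_of_le_one_of_le (by positivity) hb0 hb ?_ ?_
      · linarith [Real.exp_pos (-(Y * q))]
      · linarith [Real.add_one_le_exp (-(Y * q))]
    calc exp (-Y) - exp (-Y) * exp (-(Y * q)) = exp (-Y) * (1 - exp (-(Y * q))) := by ring
      _ ≤ exp (-Y) * (Y * q) ^ b := by gcongr
      _ = (Y ^ b * exp (-Y)) * q ^ b := by rw [Real.mul_rpow hY0 hq0]; ring
      _ ≤ _ := mul_le_mul_of_nonneg_right (rpow_mul_exp_neg_le hY0 hb0 hb) hqb
  have h2' : 0 ≤ exp (-Y) - exp (-X) := by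
    have : exp (-X) ≤ exp (-Y) := Real.exp_le_exp.2 (by rw [hXY]; nlinarith)
    linarith
  have e1 : -w ^ 2 / (8 * t) = -(X / 2) := by rw [hX]; field_simp; ring
  have e2 : -w ^ 2 / (8 * m) = -(Y / 2) := by rw [hY]; field_simp; ring
  have h4 : exp (-X) ≤ exp (-(X / 2)) := Real.exp_le_exp.2 (by linarith)
  rw [e1, e2, gk_eq, gk_eq, ← mul_sub, abs_mul, abs_of_nonneg (by positivity : 0 ≤ (√(4 * π))⁻¹)]
  have key : (√t)⁻¹ * exp (-X) - (√m)⁻¹ * exp (-Y) =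
      ((√t)⁻¹ - (√m)⁻¹) * exp (-X) - (√m)⁻¹ * (exp (-Y) - exp (-X)) := by ring
  have hA : ((√t)⁻¹ - (√m)⁻¹) * exp (-X) ≤ (√t)⁻¹ * q ^ b * exp (-(X / 2)) :=
    mul_le_mul h1 h4 (by positivity) (by positivity)
  have hB : (√m)⁻¹ * (exp (-Y) - exp (-X)) ≤ (√m)⁻¹ * (2 * exp (-(Y / 2)) * q ^ b) := by gcongr
  have hA0 : 0 ≤ ((√t)⁻¹ - (√m)⁻¹) * exp (-X) := mul_nonneg (by linarith) (by positivity)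
  have hB0 : 0 ≤ (√m)⁻¹ * (exp (-Y) - exp (-X)) := mul_nonneg hβ h2'
  have hP : 0 ≤ (√t)⁻¹ * q ^ b * exp (-(X / 2)) := by positivity
  have hab : |(√t)⁻¹ * exp (-X) - (√m)⁻¹ * exp (-Y)| ≤ 2 * q ^ b *
      ((√t)⁻¹ * exp (-(X / 2)) + (√m)⁻¹ * exp (-(Y / 2))) := by
    have hQ : 0 ≤ (√m)⁻¹ * (2 * exp (-(Y / 2)) * q ^ b) := by positivity
    rw [key, abs_le]; constructor <;> nlinarith
  calc _ ≤ 1 * _ := mul_le_mul inv_sqrt_four_pi_le hab (abs_nonneg _) zero_le_one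
    _ = _ := one_mul _

/-- `|r||w| ≤ 4r²t + w²/(16t)`, exponentiated. -/
lemma exp_weight_le {r T t : ℝ} (ht : 0 < t) (htT : t ≤ T) (w : ℝ) :
    exp (|r| * |w|) * exp (-w ^ 2 / (8 * t)) ≤ exp (4 * r ^ 2 * T) * exp (-w ^ 2 / (16 * t)) := by
  rw [← Real.exp_add, ← Real.exp_add, Real.exp_le_exp]
  have h1 : |r| * |w| ≤ 4 * r ^ 2 * t + w ^ 2 / (16 * t) := by
    have : 4 * r ^ 2 * t + w ^ 2 / (16 * t) - |r| * |w| = (8 * t * |r| - |w|) ^ 2 / (16 * t) := by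
      field_simp
      rw [← sq_abs r, ← sq_abs w]; ring
    have h2 : 0 ≤ (8 * t * |r| - |w|) ^ 2 / (16 * t) := by positivity
    linarith
  have h3 : 4 * r ^ 2 * t ≤ 4 * r ^ 2 * T := by gcongr
  have h4 : -w ^ 2 / (8 * t) = - (w ^ 2 / (16 * t)) - w ^ 2 / (16 * t) := by field_simp; ring
  have h5 : -w ^ 2 / (16 * t) = - (w ^ 2 / (16 * t)) := neg_div _ _
  rw [h4, h5]; linarith

lemma weight_abs_gk_sub_le {r T t m b : ℝ} (ht : 0 < t) (htm : t ≤ m) (hmT : m ≤ T)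
    (hb0 : 0 ≤ b) (hb : b ≤ 1) (w : ℝ) :
    exp (|r| * |w|) * |gk t w - gk m w| ≤
      2 * exp (4 * r ^ 2 * T) * ((m - t) / t) ^ b * (psi t w + psi m w) := by
  have hm : 0 < m := ht.trans_le htm
  have hq0 : 0 ≤ (m - t) / t := div_nonneg (by linarith) ht.le
  have hqb : 0 ≤ ((m - t) / t) ^ b := Real.rpow_nonneg hq0 b
  have h1 := exp_weight_le (r := r) ht (htm.trans hmT) w
  have h2 := exp_weight_le (r := r) hm hmT w
  calc _ ≤ exp (|r| * |w|) * _ :=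
        mul_le_mul_of_nonneg_left (abs_gk_sub_le ht htm hb0 hb w) (exp_pos _).le
    _ = 2 * ((m - t) / t) ^ b * ((√t)⁻¹ * (exp (|r| * |w|) * exp (-w ^ 2 / (8 * t))) +
          (√m)⁻¹ * (exp (|r| * |w|) * exp (-w ^ 2 / (8 * m)))) := by ring
    _ ≤ 2 * ((m - t) / t) ^ b * ((√t)⁻¹ * (exp (4 * r ^ 2 * T) * exp (-w ^ 2 / (16 * t))) +
          (√m)⁻¹ * (exp (4 * r ^ 2 * T) * exp (-w ^ 2 / (16 * m)))) := by gcongr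
    _ = _ := by unfold psi; ring

/-- Counterpart of `weight_abs_gk_sub_le` when the earlier kernel is absent: for `m ≤ d` the factor
`(d/m)^b ≥ 1` is free. -/
lemma weight_abs_gk_le {r T m d b : ℝ} (hm : 0 < m) (hmd : m ≤ d) (hmT : m ≤ T)
    (hb0 : 0 ≤ b) (w : ℝ) :
    exp (|r| * |w|) * |gk m w| ≤ 2 * exp (4 * r ^ 2 * T) * (d / m) ^ b * psi m w := by
  have h2 := exp_weight_le (r := r) hm hmT w
  have hY : exp (-(w ^ 2 / (4 * m))) ≤ exp (-w ^ 2 / (8 * m)) := by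
    rw [neg_div, Real.exp_le_exp]
    have : w ^ 2 / (8 * m) ≤ w ^ 2 / (4 * m) := by gcongr; norm_num
    linarith
  have h1 : 1 ≤ (d / m) ^ b := Real.one_le_rpow (by rw [one_le_div hm]; exact hmd) hb0
  have h0 : |gk m w| ≤ (√m)⁻¹ * exp (-w ^ 2 / (8 * m)) := by
    rw [gk_eq, abs_of_nonneg (by positivity)]
    calc _ ≤ 1 * ((√m)⁻¹ * exp (-w ^ 2 / (8 * m))) := by
          gcongr; exact inv_sqrt_four_pi_le
      _ = _ := one_mul _
  calc _ ≤ exp (|r| * |w|) * ((√m)⁻¹ * exp (-w ^ 2 / (8 * m))) := by gcongr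
    _ = (√m)⁻¹ * (exp (|r| * |w|) * exp (-w ^ 2 / (8 * m))) := by ring
    _ ≤ (√m)⁻¹ * (exp (4 * r ^ 2 * T) * exp (-w ^ 2 / (16 * m))) := by gcongr
    _ = exp (4 * r ^ 2 * T) * 1 * psi m w := by unfold psi; ring
    _ ≤ (2 * exp (4 * r ^ 2 * T)) * (d / m) ^ b * psi m w := by
      have : 0 ≤ psi m w := by unfold psi; positivity
      gcongr
      linarith [exp_pos (4 * r ^ 2 * T)]

/-- Both image terms of the weighted kernel carry the weight `e^{-r(x-z)}`; as `|x - z| ≤ x + z` it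
is at most `e^{|r||w|}` for `w = x - z` and for `w = x + z`. -/
lemma abs_Gr_sub_le {r t m x z : ℝ} (hx : 0 ≤ x) (hz : 0 ≤ z) :
    |Gr r t x z - Gr r m x z| ≤ exp (|r| * |x - z|) * |gk t (x - z) - gk m (x - z)| +
      exp (|r| * |x + z|) * |gk t (x + z) - gk m (x + z)| := by
  have h1 : -r * (x - z) ≤ |r| * |x - z| := by
    rw [← abs_mul, neg_mul]; exact neg_le_abs _
  have h2 : |x - z| ≤ |x + z| := by
    rw [abs_of_nonneg (by linarith : 0 ≤ x + z), abs_le]; constructor <;> linarith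
  have h3 : -r * (x - z) ≤ |r| * |x + z| := h1.trans (by gcongr)
  unfold Gr
  rw [G_eq, G_eq, ← mul_sub, abs_mul, abs_of_pos (exp_pos _)]
  calc _ ≤ exp (-r * (x - z)) * (|gk t (x - z) - gk m (x - z)| + |gk t (x + z) - gk m (x + z)|) := by
        gcongr
        rw [show gk t (x - z) - gk t (x + z) - (gk m (x - z) - gk m (x + z)) =
          (gk t (x - z) - gk m (x - z)) - (gk t (x + z) - gk m (x + z)) by ring]
        exact abs_sub _ _
    _ ≤ _ := by rw [mul_add]; gcongr

lemma Gr_of_nonpos {t : ℝ} (ht : t ≤ 0) (r x z : ℝ) : Gr r t x z = 0 := by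
  simp [Gr, G_eq, gk_of_nonpos ht]

/-! ### The `L²` norm of the kernel difference -/

lemma lintegral_psi_sq {t : ℝ} (ht : 0 < t) :
    ∫⁻ w, ENNReal.ofReal (psi t w ^ 2) = ENNReal.ofReal (√(8 * π) * (√t)⁻¹) := by
  have e : ∀ w, psi t w ^ 2 = t⁻¹ * exp (-(1 / (8 * t)) * w ^ 2) := by
    intro w
    unfold psi
    rw [mul_pow, inv_pow, Real.sq_sqrt ht.le, ← Real.exp_nat_mul]
    congr 2
    field_simp; ring
  simp_rw [e]
  rw [← ofReal_integral_eq_lintegral_ofReal, integral_const_mul, integral_gaussian]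
  · congr 1
    rw [show π / (1 / (8 * t)) = (8 * π) * t by field_simp, Real.sqrt_mul (by positivity)]
    have := Real.sqrt_pos.2 ht
    nth_rewrite 1 [← Real.sq_sqrt ht.le]
    field_simp
  · exact (integrable_exp_neg_mul_sq (by positivity)).const_mul _
  · exact Eventually.of_forall fun w => by positivity

lemma measurable_psi : Measurable (Function.uncurry psi) := by
  unfold psi Function.uncurry; fun_prop

lemma measurable_Gr (r t x : ℝ) : Measurable fun q : ℝ × ℝ => Gr r (t - q.1) x q.2 := by
  unfold Gr G; fun_prop

lemma psi_nonneg (t w : ℝ) : 0 ≤ psi t w := by unfold psi; positivity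

lemma lintegral_sq_le_of_psi {f : ℝ → ℝ} {a d c x : ℝ} (ha : 0 < a) (had : a ≤ d)
    (hf : ∀ z, 0 < z → |f z| ≤ c * (psi a (x - z) + psi d (x - z) +
      (psi a (x + z) + psi d (x + z)))) :
    ∫⁻ z in Ioi 0, ENNReal.ofReal (f z ^ 2) ≤
      ENNReal.ofReal (16 * c ^ 2 * √(8 * π) * (√a)⁻¹) := by
  have hd : 0 < d := ha.trans_le had
  have hm : ∀ t, Measurable (psi t) := fun t => measurable_psi.of_uncurry_left
  have hm' : ∀ t, Measurable fun w => ENNReal.ofReal (psi t w ^ 2) := fun t =>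
    ((hm t).pow_const 2).ennreal_ofReal
  have hdle : (√d)⁻¹ ≤ (√a)⁻¹ := by
    have := Real.sqrt_pos.2 ha
    gcongr
  have hsub : ∀ t, 0 < t → ∫⁻ z, ENNReal.ofReal (psi t (x - z) ^ 2) =
      ENNReal.ofReal (√(8 * π) * (√t)⁻¹) := fun t ht => by
    rw [← lintegral_psi_sq ht, lintegral_sub_left_eq_self (fun w => ENNReal.ofReal (psi t w ^ 2)) x]
  have hadd : ∀ t, 0 < t → ∫⁻ z, ENNReal.ofReal (psi t (x + z) ^ 2) =
      ENNReal.ofReal (√(8 * π) * (√t)⁻¹) := fun t ht => by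
    rw [← lintegral_psi_sq ht, lintegral_add_left_eq_self (fun w => ENNReal.ofReal (psi t w ^ 2)) x]
  calc ∫⁻ z in Ioi 0, ENNReal.ofReal (f z ^ 2)
      ≤ ∫⁻ z in Ioi 0, ENNReal.ofReal (4 * c ^ 2) *
          ((ENNReal.ofReal (psi a (x - z) ^ 2) + ENNReal.ofReal (psi d (x - z) ^ 2)) +
          (ENNReal.ofReal (psi a (x + z) ^ 2) + ENNReal.ofReal (psi d (x + z) ^ 2))) := by
        refine setLIntegral_mono' measurableSet_Ioi fun z hz => ?_
        rw [← ENNReal.ofReal_add (by positivity) (by positivity),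
          ← ENNReal.ofReal_add (by positivity) (by positivity),
          ← ENNReal.ofReal_add (by positivity) (by positivity),
          ← ENNReal.ofReal_mul (by positivity)]
        apply ENNReal.ofReal_le_ofReal
        have h1 := sq_le_sq' (by linarith [hf z hz, abs_nonneg (f z)]) (hf z hz)
        rw [sq_abs] at h1
        refine h1.trans ?_
        generalize psi a (x - z) = A
        generalize psi d (x - z) = B
        generalize psi a (x + z) = C
        generalize psi d (x + z) = D
        rw [mul_pow, mul_comm (4 : ℝ), mul_assoc]
        gcongr
        nlinarith [sq_nonneg (A - B), sq_nonneg (A - C), sq_nonneg (A - D), sq_nonneg (B - C),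
          sq_nonneg (B - D), sq_nonneg (C - D)]
    _ ≤ ∫⁻ z, ENNReal.ofReal (4 * c ^ 2) *
          ((ENNReal.ofReal (psi a (x - z) ^ 2) + ENNReal.ofReal (psi d (x - z) ^ 2)) +
          (ENNReal.ofReal (psi a (x + z) ^ 2) + ENNReal.ofReal (psi d (x + z) ^ 2))) :=
        setLIntegral_le_lintegral _ _
    _ = ENNReal.ofReal (4 * c ^ 2) *
        ((ENNReal.ofReal (√(8 * π) * (√a)⁻¹) + ENNReal.ofReal (√(8 * π) * (√d)⁻¹)) +
          (ENNReal.ofReal (√(8 * π) * (√a)⁻¹) + ENNReal.ofReal (√(8 * π) * (√d)⁻¹))) := by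
        have m1 : ∀ t, Measurable fun z => ENNReal.ofReal (psi t (x - z) ^ 2) := fun t =>
          (hm' t).comp (measurable_const.sub measurable_id)
        have m2 : ∀ t, Measurable fun z => ENNReal.ofReal (psi t (x + z) ^ 2) := fun t =>
          (hm' t).comp (measurable_const.add measurable_id)
        rw [lintegral_const_mul _ (((m1 a).fun_add (m1 d)).fun_add ((m2 a).fun_add (m2 d))),
          lintegral_add_left ((m1 a).fun_add (m1 d)), lintegral_add_left (m1 a),
          lintegral_add_left (m2 a), hsub a ha, hsub d hd, hadd a ha, hadd d hd]
    _ ≤ _ := by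
        rw [← ENNReal.ofReal_add (by positivity) (by positivity),
          ← ENNReal.ofReal_add (by positivity) (by positivity),
          ← ENNReal.ofReal_mul (by positivity)]
        apply ENNReal.ofReal_le_ofReal
        have : 0 ≤ c ^ 2 * √(8 * π) := by positivity
        nlinarith

/-- The singular time weight `v^{-(2b+1/2)}` on `(0,T]`, extended by zero. -/
noncomputable def timeWeight (T b v : ℝ) : ENNReal :=
  (Ioc 0 T).indicator (fun v => ENNReal.ofReal (v ^ (-(2 * b + 1 / 2)))) v

/-- The constant of the spatial `L²` estimate. -/
noncomputable def kerConst (r T : ℝ) : ℝ := 16 * (2 * exp (4 * r ^ 2 * T)) ^ 2 * √(8 * π)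

lemma const_eq {r T b d a : ℝ} (hd : 0 ≤ d) (ha : 0 < a) :
    16 * (2 * exp (4 * r ^ 2 * T) * (d / a) ^ b) ^ 2 * √(8 * π) * (√a)⁻¹ =
      (kerConst r T * d ^ (2 * b)) * a ^ (-(2 * b + 1 / 2)) := by
  have h1 : ((d / a) ^ b) ^ 2 = d ^ (2 * b) * a ^ (-(2 * b)) := by
    rw [← Real.rpow_mul_natCast (by positivity), Real.div_rpow hd ha.le, Real.rpow_neg ha.le]
    push_cast
    rw [mul_comm b 2, div_eq_mul_inv]
  have h2 : (√a)⁻¹ = a ^ (-(1 / 2 : ℝ)) := by rw [Real.rpow_neg ha.le, Real.sqrt_eq_rpow]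
  rw [mul_pow _ ((d / a) ^ b), h1, h2, neg_add, Real.rpow_add ha]
  unfold kerConst; ring

/-- Spatial `L²` estimate at a fixed time `s'`. Both kernels are present if `s' < s`, only the later
one if `s ≤ s' < t`, and none if `t ≤ s'`. -/
lemma lintegral_Gr_sub_sq_inner {r T b s t x s' : ℝ} (hb0 : 0 ≤ b) (hb : b ≤ 1) (hs' : 0 < s')
    (hst : s ≤ t) (htT : t ≤ T) (hx : 0 ≤ x) :
    ∫⁻ z in Ioi 0, ENNReal.ofReal ((Gr r (s - s') x z - Gr r (t - s') x z) ^ 2) ≤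
      ENNReal.ofReal (kerConst r T * (t - s) ^ (2 * b)) *
        (timeWeight T b (s - s') + timeWeight T b (t - s')) := by
  have hA : 0 ≤ kerConst r T * (t - s) ^ (2 * b) :=
    mul_nonneg (by unfold kerConst; positivity) (Real.rpow_nonneg (by linarith) _)
  rcases lt_or_ge 0 (s - s') with h | h
  · have hd : t - s' - (s - s') = t - s := by ring
    refine (lintegral_sq_le_of_psi (a := s - s') (d := t - s') (x := x)
      (c := 2 * exp (4 * r ^ 2 * T) * ((t - s) / (s - s')) ^ b) h (by linarith) ?_).trans ?_
    · intro z hz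
      have h1 := weight_abs_gk_sub_le (r := r) (T := T) (b := b) h (by linarith : s - s' ≤ t - s')
        (by linarith) hb0 hb (x - z)
      have h2 := weight_abs_gk_sub_le (r := r) (T := T) (b := b) h (by linarith : s - s' ≤ t - s')
        (by linarith) hb0 hb (x + z)
      rw [hd] at h1 h2
      rw [mul_add]
      exact (abs_Gr_sub_le hx hz.le).trans (add_le_add h1 h2)
    · rw [const_eq (by linarith) h, ENNReal.ofReal_mul hA]
      gcongr
      refine le_trans (le_of_eq ?_) le_self_add
      rw [timeWeight, indicator_of_mem (show s - s' ∈ Ioc 0 T from ⟨h, by linarith⟩)]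
  rcases lt_or_ge 0 (t - s') with h' | h'
  · refine (lintegral_sq_le_of_psi (a := t - s') (d := t - s') (x := x)
      (c := 2 * exp (4 * r ^ 2 * T) * ((t - s) / (t - s')) ^ b) h' le_rfl ?_).trans ?_
    · intro z hz
      have hq : 0 ≤ ((t - s) / (t - s')) ^ b :=
        Real.rpow_nonneg (div_nonneg (by linarith) h'.le) _
      have h1 := weight_abs_gk_le (r := r) (T := T) (b := b) (d := t - s) h' (by linarith)
        (by linarith) hb0 (x - z)
      have h2 := weight_abs_gk_le (r := r) (T := T) (b := b) (d := t - s) h' (by linarith)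
        (by linarith) hb0 (x + z)
      have h3 := abs_Gr_sub_le (r := r) (t := s - s') (m := t - s') hx hz.le
      rw [gk_of_nonpos h, gk_of_nonpos h, zero_sub, zero_sub, abs_neg, abs_neg] at h3
      refine h3.trans ((add_le_add h1 h2).trans ?_)
      rw [← mul_add]
      gcongr
      · linarith [psi_nonneg (t - s') (x - z)]
      · linarith [psi_nonneg (t - s') (x + z)]
    · rw [const_eq (by linarith) h', ENNReal.ofReal_mul hA]
      gcongr
      refine le_trans (le_of_eq ?_) le_add_self
      rw [timeWeight, indicator_of_mem (show t - s' ∈ Ioc 0 T from ⟨h', by linarith⟩)]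
  · simp [Gr_of_nonpos h, Gr_of_nonpos h']

lemma measurable_timeWeight (T b : ℝ) : Measurable (timeWeight T b) := by
  unfold timeWeight
  exact Measurable.indicator (by fun_prop) measurableSet_Ioc

lemma lintegral_timeWeight_lt_top (T : ℝ) {b : ℝ} (hb : b < 1 / 4) : ∫⁻ v, timeWeight T b v < ⊤ := by
  unfold timeWeight
  rw [lintegral_indicator measurableSet_Ioc]
  have := (intervalIntegral.intervalIntegrable_rpow' (a := 0) (b := T)
    (r := -(2 * b + 1 / 2)) (by linarith)).1
  exact this.lintegral_lt_top

lemma exists_lintegral_Gr_sub_sq_le (r T : ℝ) {b : ℝ} (hb0 : 0 ≤ b)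
    (hb : b < 1 / 4) :
    ∃ C > (0 : ℝ), ∀ s t x : ℝ, s ≤ t → t ≤ T → 0 ≤ x →
      ∫⁻ q in Ioc 0 T ×ˢ Ioi 0, ENNReal.ofReal
          ((Gr r (s - q.1) x q.2 - Gr r (t - q.1) x q.2) ^ 2) ≤
        ENNReal.ofReal (C * (t - s) ^ (2 * b)) := by
  have hfin := lintegral_timeWeight_lt_top T hb
  set I := ∫⁻ v, timeWeight T b v with hI
  have hA : 0 < kerConst r T := by unfold kerConst; positivity
  refine ⟨kerConst r T * (2 * I.toReal + 1), by positivity, fun s t x hst htT hx => ?_⟩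
  have hts : 0 ≤ (t - s) ^ (2 * b) := Real.rpow_nonneg (by linarith) _
  have hmeas : Measurable fun q : ℝ × ℝ =>
      ENNReal.ofReal ((Gr r (s - q.1) x q.2 - Gr r (t - q.1) x q.2) ^ 2) :=
    (((measurable_Gr r s x).sub (measurable_Gr r t x)).pow_const 2).ennreal_ofReal
  have hmk : ∀ s, Measurable fun s' => timeWeight T b (s - s') := fun s =>
    (measurable_timeWeight T b).comp (measurable_const.sub measurable_id)
  rw [Measure.volume_eq_prod, ← Measure.prod_restrict, lintegral_prod _ hmeas.aemeasurable]
  calc _ ≤ ∫⁻ s' in Ioc 0 T, ENNReal.ofReal (kerConst r T * (t - s) ^ (2 * b)) *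
          (timeWeight T b (s - s') + timeWeight T b (t - s')) :=
        setLIntegral_mono' measurableSet_Ioc fun s' hs' =>
          lintegral_Gr_sub_sq_inner hb0 (by linarith) hs'.1 hst htT hx
    _ ≤ ∫⁻ s', ENNReal.ofReal (kerConst r T * (t - s) ^ (2 * b)) *
          (timeWeight T b (s - s') + timeWeight T b (t - s')) := setLIntegral_le_lintegral _ _
    _ = ENNReal.ofReal (kerConst r T * (t - s) ^ (2 * b)) * (I + I) := by
        rw [lintegral_const_mul _ ((hmk s).fun_add (hmk t)), lintegral_add_left (hmk s),
          lintegral_sub_left_eq_self (timeWeight T b) s, lintegral_sub_left_eq_self (timeWeight T b) t]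
    _ = ENNReal.ofReal (kerConst r T * (t - s) ^ (2 * b)) * ENNReal.ofReal (I.toReal + I.toReal) := by
        rw [ENNReal.ofReal_add (by positivity) (by positivity), ENNReal.ofReal_toReal hfin.ne]
    _ ≤ _ := by
        rw [← ENNReal.ofReal_mul (by positivity)]
        apply ENNReal.ofReal_le_ofReal
        have : 0 ≤ kerConst r T * (t - s) ^ (2 * b) := by positivity
        nlinarith

/-! ### Cauchy–Schwarz and the increment of the convolution -/

lemma sq_integral_mul_le {α : Type*} [MeasurableSpace α] {μ : Measure α} {f g : α → ℝ}
    (hf : MemLp f 2 μ) (hg : MemLp g 2 μ) :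
    (∫ a, f a * g a ∂μ) ^ 2 ≤ (∫ a, f a ^ 2 ∂μ) * ∫ a, g a ^ 2 ∂μ := by
  have h := integral_mul_norm_le_Lp_mul_Lq (μ := μ) (f := f) (g := g) (p := 2) (q := 2)
    Real.HolderConjugate.two_two (by simpa using hf) (by simpa using hg)
  have h1 : |∫ a, f a * g a ∂μ| ≤ ∫ a, ‖f a‖ * ‖g a‖ ∂μ := by
    refine (abs_integral_le_integral_abs).trans (le_of_eq ?_)
    simp [abs_mul]
  have h2 := h1.trans h
  simp only [Real.norm_eq_abs, Real.rpow_two, sq_abs, ← Real.sqrt_eq_rpow] at h2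
  have h3 := sq_le_sq' (by linarith [abs_nonneg (∫ a, f a * g a ∂μ),
    (show 0 ≤ √(∫ a, f a ^ 2 ∂μ) * √(∫ a, g a ^ 2 ∂μ) by positivity)]) h2
  rwa [sq_abs, mul_pow, Real.sq_sqrt (integral_nonneg fun a => sq_nonneg _),
    Real.sq_sqrt (integral_nonneg fun a => sq_nonneg _)] at h3

/-- The weighted convolution `e^{-rx} F(t,x)` as a single integral over `(0,T] × (0,∞)`, a domain
that does not depend on `t`: the kernel vanishes at nonpositive times. -/
lemma weighted_convolution_eq {r T t x : ℝ} {φ h : ℝ → ℝ → ℝ} (htT : t ≤ T)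
    (hint : Integrable (fun q : ℝ × ℝ => Gr r (t - q.1) x q.2 *
      (exp (-r * q.2) * φ q.1 q.2 * h q.1 q.2)) (volume.restrict (Ioc 0 T ×ˢ Ioi 0))) :
    exp (-r * x) * (∫ s' in Ioc 0 t, ∫ z in Ioi 0, G (t - s') x z * φ s' z * h s' z) =
      ∫ q in Ioc 0 T ×ˢ Ioi 0, Gr r (t - q.1) x q.2 *
        (exp (-r * q.2) * φ q.1 q.2 * h q.1 q.2) := by
  have e : ∀ s' z, Gr r (t - s') x z * (exp (-r * z) * φ s' z * h s' z) =
      exp (-r * x) * (G (t - s') x z * φ s' z * h s' z) := by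
    intro s' z
    have : exp (-r * (x - z)) * exp (-r * z) = exp (-r * x) := by
      rw [← Real.exp_add]; ring_nf
    rw [← this]; unfold Gr; ring
  rw [Measure.volume_eq_prod, ← Measure.prod_restrict] at hint ⊢
  rw [integral_prod _ hint]
  simp only [e, integral_const_mul]
  congr 1
  symm
  refine setIntegral_eq_of_subset_of_forall_sdiff_eq_zero measurableSet_Ioc
    (Ioc_subset_Ioc_right htT) fun s' hs' => ?_
  have h1 : t - s' ≤ 0 := by
    by_contra hc
    exact hs'.2 ⟨hs'.1.1, by linarith⟩
  simp [G_eq, gk_of_nonpos h1]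

/-- Cauchy–Schwarz for the weighted increment: the kernel contributes the bound `hC`, and
`e^{-rz} σ(z,u) h` is dominated by `R (1 + ‖u‖) |h|`. -/
lemma sq_sub_le {r T R N C b : ℝ} (hT : 0 < T)
    (hC : ∀ s t x : ℝ, s ≤ t → t ≤ T → 0 ≤ x →
      ∫⁻ q in Ioc 0 T ×ˢ Ioi 0, ENNReal.ofReal
          ((Gr r (s - q.1) x q.2 - Gr r (t - q.1) x q.2) ^ 2) ≤
        ENNReal.ofReal (C * (t - s) ^ (2 * b))) (hC0 : 0 < C)
    (hR : 0 < R) {σ u h : ℝ → ℝ → ℝ} (hσ : Measurable (Function.uncurry σ))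
    (hσb : ∀ x ≥ (0:ℝ), ∀ u : ℝ, |σ x u| ≤ R * (Real.exp (r * x) + |u|))
    (hu : ContinuousOn (Function.uncurry u) (Icc 0 T ×ˢ Ici 0)) (hub : CrBdd r T u)
    (hh : Measurable (Function.uncurry h))
    (hhi : IntegrableOn (fun q : ℝ × ℝ => (h q.1 q.2) ^ 2) (Ioc 0 T ×ˢ Ioi 0))
    (hhN : (∫ q in (Ioc (0:ℝ) T ×ˢ Ioi (0:ℝ)), (h q.1 q.2) ^ 2) ≤ N ^ 2)
    {s t x : ℝ} (hs : 0 ≤ s) (hst : s ≤ t) (htT : t ≤ T) (hx : 0 ≤ x) :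
    (Real.exp (-r * x) *
        (∫ s' in Ioc (0:ℝ) s, ∫ z in Ioi (0:ℝ), G (s - s') x z * σ z (u s' z) * h s' z) -
      Real.exp (-r * x) *
        (∫ s' in Ioc (0:ℝ) t, ∫ z in Ioi (0:ℝ), G (t - s') x z * σ z (u s' z) * h s' z)) ^ 2
      ≤ C * (t - s) ^ (2 * b) * ((R * (1 + CrNorm r T u)) ^ 2 * N ^ 2) := by
  set S : Set (ℝ × ℝ) := Ioc 0 T ×ˢ Ioi 0 with hS
  have hSm : MeasurableSet S := measurableSet_Ioc.prod measurableSet_Ioi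
  set μ : Measure (ℝ × ℝ) := volume.restrict S with hμ
  set M := CrNorm r T u with hM
  have hle : ∀ q ∈ S, exp (-r * q.2) * |u q.1 q.2| ≤ M := fun q hq =>
    le_csSup hub ⟨q, ⟨⟨hq.1.1.le, hq.1.2⟩, Ioi_subset_Ici_self hq.2⟩, rfl⟩
  have hM0 : 0 ≤ M := le_trans (by positivity)
    (hle (T, 1) ⟨⟨hT, le_rfl⟩, show (0 : ℝ) < 1 by norm_num⟩)
  have hK : ∀ s t, s ≤ t → t ≤ T →
      MemLp (fun q : ℝ × ℝ => Gr r (s - q.1) x q.2 - Gr r (t - q.1) x q.2) 2 μ := by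
    intro s t hst htT
    have hm := (measurable_Gr r s x).fun_sub (measurable_Gr r t x)
    rw [memLp_two_iff_integrable_sq hm.aestronglyMeasurable]
    refine ⟨(hm.pow_const 2).aestronglyMeasurable, ?_⟩
    rw [hasFiniteIntegral_iff_ofReal (Eventually.of_forall fun q => sq_nonneg _)]
    exact (hC s t x hst htT hx).trans_lt ENNReal.ofReal_lt_top
  -- For `s = 0` the subtracted kernel `Gr r (-q.1)` vanishes on `S` (junk value at negative times),
  -- so the difference bound also gives square integrability of a single kernel.
  have hK1 : ∀ t, 0 ≤ t → t ≤ T → MemLp (fun q : ℝ × ℝ => Gr r (t - q.1) x q.2) 2 μ := by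
    intro t ht htT
    refine (hK 0 t ht htT).neg.ae_eq ?_
    filter_upwards [ae_restrict_mem hSm] with q hq
    have : -q.1 ≤ 0 := by linarith [hq.1.1]
    simp [Gr_of_nonpos this]
  set f : ℝ × ℝ → ℝ := fun q => exp (-r * q.2) * σ q.2 (u q.1 q.2) * h q.1 q.2 with hf
  have hfle : ∀ q ∈ S, |f q| ≤ R * (1 + M) * |h q.1 q.2| := by
    intro q hq
    rw [hf]
    simp only [abs_mul, Real.abs_exp]
    refine mul_le_mul_of_nonneg_right ?_ (abs_nonneg _)
    have h0 : exp (-r * q.2) * exp (r * q.2) = 1 := by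
      rw [← Real.exp_add]; simp
    calc exp (-r * q.2) * |σ q.2 (u q.1 q.2)|
        ≤ exp (-r * q.2) * (R * (exp (r * q.2) + |u q.1 q.2|)) := by
          gcongr; exact hσb _ (le_of_lt hq.2) _
      _ = R * (exp (-r * q.2) * exp (r * q.2) + exp (-r * q.2) * |u q.1 q.2|) := by ring
      _ ≤ R * (1 + M) := by rw [h0]; gcongr; exact hle q hq
  have hum : AEMeasurable (fun q : ℝ × ℝ => u q.1 q.2) μ :=
    (hu.mono (prod_mono Ioc_subset_Icc_self Ioi_subset_Ici_self)).aemeasurable hSm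
  have hfm : AEStronglyMeasurable f μ := by
    have h1 : AEMeasurable (fun q : ℝ × ℝ => σ q.2 (u q.1 q.2)) μ :=
      hσ.comp_aemeasurable (measurable_snd.aemeasurable.prodMk hum)
    have h2 : AEMeasurable (fun q : ℝ × ℝ => h q.1 q.2) μ := hh.aemeasurable
    have h3 : AEMeasurable (fun q : ℝ × ℝ => exp (-r * q.2)) μ := by fun_prop
    exact ((h3.mul h1).mul h2).aestronglyMeasurable
  have hh2 : MemLp (fun q : ℝ × ℝ => h q.1 q.2) 2 μ := by
    have hm : AEStronglyMeasurable (fun q : ℝ × ℝ => h q.1 q.2) μ := hh.aestronglyMeasurable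
    exact (memLp_two_iff_integrable_sq hm).2 hhi
  have hf2 : MemLp f 2 μ := by
    refine hh2.of_le_mul (c := R * (1 + M)) hfm ?_
    filter_upwards [ae_restrict_mem hSm] with q hq using hfle q hq
  have hfI : ∫ q, f q ^ 2 ∂μ ≤ (R * (1 + M)) ^ 2 * N ^ 2 := by
    calc ∫ q, f q ^ 2 ∂μ ≤ ∫ q, (R * (1 + M)) ^ 2 * (h q.1 q.2) ^ 2 ∂μ := by
          refine integral_mono_ae hf2.integrable_sq (hhi.const_mul _) ?_
          filter_upwards [ae_restrict_mem hSm] with q hq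
          have := pow_le_pow_left₀ (abs_nonneg _) (hfle q hq) 2
          rwa [sq_abs, mul_pow (R * (1 + M)), sq_abs] at this
      _ = (R * (1 + M)) ^ 2 * ∫ q, (h q.1 q.2) ^ 2 ∂μ := integral_const_mul _ _
      _ ≤ _ := by gcongr
  have hKI : ∫ q, (Gr r (s - q.1) x q.2 - Gr r (t - q.1) x q.2) ^ 2 ∂μ ≤
      C * (t - s) ^ (2 * b) := by
    have h0 : 0 ≤ C * (t - s) ^ (2 * b) :=
      mul_nonneg hC0.le (Real.rpow_nonneg (by linarith) _)
    rw [integral_eq_lintegral_of_nonneg_ae (Eventually.of_forall fun q => sq_nonneg _)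
      (hK s t hst htT).integrable_sq.aestronglyMeasurable]
    exact ENNReal.toReal_le_of_le_ofReal h0 (hC s t x hst htT hx)
  have hi : ∀ t, 0 ≤ t → t ≤ T → Integrable (fun q => Gr r (t - q.1) x q.2 * f q) μ :=
    fun t ht htT => (hK1 t ht htT).integrable_mul hf2
  rw [weighted_convolution_eq (φ := fun s' z => σ z (u s' z)) (hst.trans htT)
      (hi s hs (hst.trans htT)),
    weighted_convolution_eq (φ := fun s' z => σ z (u s' z)) htT (hi t (hs.trans hst) htT),
    ← integral_sub (hi s hs (hst.trans htT)) (hi t (hs.trans hst) htT)]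
  have hCS := sq_integral_mul_le (hK s t hst htT) hf2
  simp only [sub_mul] at hCS
  refine hCS.trans ?_
  exact mul_le_mul hKI hfI (integral_nonneg fun q => sq_nonneg _)
    (mul_nonneg hC0.le (Real.rpow_nonneg (by linarith) _))

/-- as in (4.14) of the paper: temporal Hölder continuity of the weighted
convolution `F`. -/
theorem stmt_15 (r T p : ℝ) (hT : 0 < T) (hp : 4 < p) :
    ∃ C > (0:ℝ), ∀ R N : ℝ, 0 < R → 1 ≤ N →
      ∀ σ : ℝ → ℝ → ℝ,
        Measurable (Function.uncurry σ) →
        (∀ x ≥ (0:ℝ), ∀ u : ℝ, |σ x u| ≤ R * (Real.exp (r * x) + |u|)) →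
      ∀ u : ℝ → ℝ → ℝ,
        ContinuousOn (Function.uncurry u) (Icc 0 T ×ˢ Ici 0) → CrBdd r T u →
      ∀ h : ℝ → ℝ → ℝ,
        Measurable (Function.uncurry h) →
        IntegrableOn (fun q : ℝ × ℝ => (h q.1 q.2) ^ 2) (Ioc 0 T ×ˢ Ioi 0) →
        (∫ q in (Ioc (0:ℝ) T ×ˢ Ioi (0:ℝ)), (h q.1 q.2) ^ 2) ≤ N ^ 2 →
      ∀ s ∈ Icc (0:ℝ) T, ∀ t ∈ Icc (0:ℝ) T, ∀ x ≥ (0:ℝ),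
        |Real.exp (-r * x) *
              (∫ s' in Ioc (0:ℝ) s, ∫ z in Ioi (0:ℝ), G (s - s') x z * σ z (u s' z) * h s' z) -
            Real.exp (-r * x) *
              (∫ s' in Ioc (0:ℝ) t, ∫ z in Ioi (0:ℝ), G (t - s') x z * σ z (u s' z) * h s' z)| ^ p
          ≤ C * R ^ p * N ^ p * T * (1 + CrNorm r T u) ^ p * |s - t| ^ ((p - 4) / 4) := by
  -- The exponent `b` is chosen so that `(|s - t| ^ (2 * b)) ^ (p / 2) = |s - t| ^ ((p - 4) / 4)`.
  set b : ℝ := 1 / 4 - 1 / p with hb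
  have hp0 : 0 < p := by linarith
  have hpinv : 1 / p < 1 / 4 := one_div_lt_one_div_of_lt (by norm_num) hp
  have hpinv0 : 0 < 1 / p := by positivity
  obtain ⟨C, hC0, hC⟩ := exists_lintegral_Gr_sub_sq_le r T (b := b) (by linarith) (by linarith)
  refine ⟨C ^ (p / 2) / T, by positivity, ?_⟩
  intro R N hR hN σ hσ hσb u hu hub h hh hhi hhN
  have hM : 0 ≤ 1 + CrNorm r T u := by
    have : 0 ≤ CrNorm r T u := Real.sSup_nonneg (by rintro _ ⟨q, -, rfl⟩; positivity)
    linarith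
  have key : ∀ s t x : ℝ, 0 ≤ s → s ≤ t → t ≤ T → 0 ≤ x →
      |Real.exp (-r * x) *
          (∫ s' in Ioc (0:ℝ) s, ∫ z in Ioi (0:ℝ), G (s - s') x z * σ z (u s' z) * h s' z) -
        Real.exp (-r * x) *
          (∫ s' in Ioc (0:ℝ) t, ∫ z in Ioi (0:ℝ), G (t - s') x z * σ z (u s' z) * h s' z)| ^ p
      ≤ C ^ (p / 2) / T * R ^ p * N ^ p * T * (1 + CrNorm r T u) ^ p *
          |s - t| ^ ((p - 4) / 4) := by
    intro s t x hs hst htT hx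
    have h2 := sq_sub_le hT hC hC0 hR hσ hσb hu hub hh hhi hhN hs hst htT hx
    rw [abs_sub_comm s t, abs_of_nonneg (by linarith : 0 ≤ t - s)]
    generalize Real.exp (-r * x) *
          (∫ s' in Ioc (0:ℝ) s, ∫ z in Ioi (0:ℝ), G (s - s') x z * σ z (u s' z) * h s' z) -
        Real.exp (-r * x) *
          (∫ s' in Ioc (0:ℝ) t, ∫ z in Ioi (0:ℝ), G (t - s') x z * σ z (u s' z) * h s' z) = D
      at h2 ⊢
    generalize 1 + CrNorm r T u = M at hM h2 ⊢
    have hd : 0 ≤ t - s := by linarith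
    have hsq : ∀ y : ℝ, 0 ≤ y → (y ^ 2) ^ (p / 2) = y ^ p := by
      intro y hy
      rw [← Real.rpow_natCast_mul hy]
      congr 1
      push_cast; ring
    calc |D| ^ p = (D ^ 2) ^ (p / 2) := by rw [← hsq _ (abs_nonneg D), sq_abs]
      _ ≤ (C * (t - s) ^ (2 * b) * ((R * M) ^ 2 * N ^ 2)) ^ (p / 2) := by gcongr
      _ = C ^ (p / 2) * (t - s) ^ ((p - 4) / 4) * (R ^ p * M ^ p * N ^ p) := by
        have hrp : 0 ≤ (t - s) ^ (2 * b) := Real.rpow_nonneg hd _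
        rw [Real.mul_rpow (by positivity) (by positivity), Real.mul_rpow hC0.le hrp,
          Real.mul_rpow (by positivity) (by positivity), hsq _ (by positivity),
          hsq _ (by positivity), Real.mul_rpow hR.le hM, ← Real.rpow_mul hd]
        congr 3
        rw [hb]; field_simp
      _ = _ := by field_simp
  intro s hs t ht x hx
  rcases le_total s t with hst | hst
  · exact key s t x hs.1 hst ht.2 hx
  · rw [abs_sub_comm, abs_sub_comm s t]
    exact key t s x ht.1 hst hs.2 hx
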